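/- Let a, b ≥ 0 be integers and let f, g ∈ S be homogeneous of degree a+1 with no common zeros along Y; set I_Z = (x², xy, y², xg − yf). Let (p, q) and (p′, q′) be two pairs of homogeneous polynomials of degrees b and 3a+b+2 respectively, each pair having no common zeros along Y, and let u, u′ : I_Z → S/(x,y) be the corresponding S-module homomorphisms with u(x²) = pf², u(xy) = pfg, u(y²) = pg², u(xg−yf) = q (mod (x,y)), and similarly for u′ with (p′,q′). Then ker u = ker u′ if and only if there exists d ∈ k* such that p′ ≡ dp (mod (x,y)) and q′ ≡ dq (mod (x,y)). -/

import Mathlib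

open MvPolynomial

/-- The pair `(f, g)` has no common zeros along the line `Y = {x = y = 0}`. -/
def NoCommonZerosAlongY {k : Type*} [Field k] (f g : MvPolynomial (Fin 4) k) : Prop :=
  ∀ c d : k, (c, d) ≠ (0, 0) → eval ![0, 0, c, d] f ≠ 0 ∨ eval ![0, 0, c, d] g ≠ 0

/-- restriction to the line `Y` -/
noncomputable def resY (k : Type*) [Field k] :
    MvPolynomial (Fin 4) k →ₐ[k] MvPolynomial (Fin 2) k :=
  aeval ![0, 0, X 0, X 1]

theorem eval_resY {k : Type*} [Field k] (v : Fin 2 → k) (r : MvPolynomial (Fin 4) k) :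
    eval v (resY k r) = eval ![0, 0, v 0, v 1] r := by
  have h : (aeval v).comp (resY k) = aeval (R := k) ![0, 0, v 0, v 1] := by
    ext i
    fin_cases i <;> simp [resY]
  have := DFunLike.congr_fun h r
  simpa [aeval_eq_eval] using this

theorem resY_eq_zero_iff {k : Type*} [Field k] (r : MvPolynomial (Fin 4) k) :
    r ∈ (Ideal.span {X 0, X 1} : Ideal (MvPolynomial (Fin 4) k)) ↔ resY k r = 0 := by
  constructor
  · intro h
    have hle : (Ideal.span {X 0, X 1} : Ideal (MvPolynomial (Fin 4) k)) ≤
        RingHom.ker (resY k) := by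
      rw [Ideal.span_le]
      intro z hz
      rcases hz with rfl | rfl <;> simp [resY, RingHom.mem_ker]
    exact hle h
  · intro h
    let J : Ideal (MvPolynomial (Fin 4) k) := Ideal.span {X 0, X 1}
    have e : ((Ideal.Quotient.mkₐ k J).comp
        (aeval (R := k) ![(X 2 : MvPolynomial (Fin 4) k), X 3])).comp (resY k)
        = Ideal.Quotient.mkₐ k J := by
      ext i
      fin_cases i
      · have : (Ideal.Quotient.mk J) (X 0) = 0 :=
          Ideal.Quotient.eq_zero_iff_mem.2 (Ideal.subset_span (by simp))
        simp [resY, this]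
      · have : (Ideal.Quotient.mk J) (X 1) = 0 :=
          Ideal.Quotient.eq_zero_iff_mem.2 (Ideal.subset_span (by simp))
        simp [resY, this]
      · simp [resY]
      · simp [resY]
    have := DFunLike.congr_fun e r
    simp only [AlgHom.comp_apply, h, map_zero] at this
    exact Ideal.Quotient.eq_zero_iff_mem.1 this.symm

theorem isRelPrime_resY {k : Type*} [Field k] [IsAlgClosed k] {p q : MvPolynomial (Fin 4) k}
    (h : NoCommonZerosAlongY p q) : IsRelPrime (resY k p) (resY k q) := by
  have key : ∀ i : Fin 2, (X i : MvPolynomial (Fin 2) k) ∈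
      (Ideal.span {resY k p, resY k q}).radical := by
    intro i
    rw [← vanishingIdeal_zeroLocus_eq_radical (K := k), mem_vanishingIdeal_iff]
    intro v hv
    rw [zeroLocus_span] at hv
    have h1 : eval v (resY k p) = 0 := by
      simpa [aeval_eq_eval] using hv (resY k p) (by simp)
    have h2 : eval v (resY k q) = 0 := by
      simpa [aeval_eq_eval] using hv (resY k q) (by simp)
    rw [eval_resY] at h1 h2
    have h0 : (v 0, v 1) = (0, 0) := by
      by_contra hne
      rcases h _ _ hne with h' | h'
      · exact h' h1
      · exact h' h2
    simp only [Prod.mk.injEq] at h0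
    fin_cases i <;> simp [h0.1, h0.2]
  intro c hcp hcq
  have hc : ∀ i : Fin 2, ∃ n : ℕ, c ∣ (X i : MvPolynomial (Fin 2) k) ^ n := by
    intro i
    obtain ⟨n, hn⟩ := key i
    refine ⟨n, ?_⟩
    obtain ⟨s, t, hst⟩ := Ideal.mem_span_pair.1 hn
    rw [← hst]
    exact dvd_add (hcp.mul_left _) (hcq.mul_left _)
  obtain ⟨n, hn⟩ := hc 0
  obtain ⟨m, hm⟩ := hc 1
  have hX : IsRelPrime (X 0 : MvPolynomial (Fin 2) k) (X 1) := by
    rw [(X_prime (R := k) (i := (0 : Fin 2))).irreducible.isRelPrime_iff_not_dvd, X_dvd_X]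
    decide
  exact (hX.pow (m := n) (n := m)) hn hm

theorem exists_unit_of_cross {k : Type*} [Field k] {p q p' q' : MvPolynomial (Fin 2) k}
    (h : IsRelPrime p q) (h' : IsRelPrime p' q') (e : q * p' = p * q') :
    ∃ d : k, d ≠ 0 ∧ p' = C d * p ∧ q' = C d * q := by
  have hun : ∀ r s : MvPolynomial (Fin 2) k, r ∣ s → s ∣ r → ∃ d : k, d ≠ 0 ∧ s = C d * r := by
    intro r s h1 h2
    obtain ⟨w, hw⟩ := associated_of_dvd_dvd h1 h2
    obtain ⟨d, hd, hwd⟩ := isUnit_iff_eq_C_of_isReduced.1 w.isUnit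
    exact ⟨d, hd.ne_zero, by rw [← hw, hwd, mul_comm]⟩
  have p1 : p ∣ p' := h.dvd_of_dvd_mul_left (e ▸ dvd_mul_right p q')
  have p2 : p' ∣ p := h'.dvd_of_dvd_mul_right (e ▸ dvd_mul_left p' q)
  have q1 : q ∣ q' := h.symm.dvd_of_dvd_mul_left (e ▸ dvd_mul_right q p')
  have q2 : q' ∣ q := h'.symm.dvd_of_dvd_mul_right (e ▸ dvd_mul_left q' p)
  by_cases hp : p = 0
  · subst hp
    obtain ⟨d, hd, hq⟩ := hun q q' q1 q2
    exact ⟨d, hd, by simpa using p1, hq⟩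
  · obtain ⟨d, hd, hq⟩ := hun p p' p1 p2
    refine ⟨d, hd, hq, mul_left_cancel₀ hp ?_⟩
    rw [← e, hq]
    ring

theorem cross_of_ker {k : Type*} [Field k] {I : Ideal (MvPolynomial (Fin 4) k)}
    (u u' : I →ₗ[MvPolynomial (Fin 4) k]
        (MvPolynomial (Fin 4) k ⧸ (Ideal.span {X 0, X 1} : Ideal (MvPolynomial (Fin 4) k))))
    (hk : LinearMap.ker u = LinearMap.ker u') {e1 e2 : I} {m q m' q' : MvPolynomial (Fin 4) k}
    (h1 : u e1 = Ideal.Quotient.mk _ m) (h2 : u e2 = Ideal.Quotient.mk _ q)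
    (h1' : u' e1 = Ideal.Quotient.mk _ m') (h2' : u' e2 = Ideal.Quotient.mk _ q') :
    resY k q * resY k m' = resY k m * resY k q' := by
  have hs : ∀ r t : MvPolynomial (Fin 4) k,
      r • (Ideal.Quotient.mk (Ideal.span {X 0, X 1} : Ideal (MvPolynomial (Fin 4) k)) t) =
        Ideal.Quotient.mk _ (r * t) := fun _ _ => rfl
  have hmem : q • e1 - m • e2 ∈ LinearMap.ker u := by
    rw [LinearMap.mem_ker, map_sub, map_smul, map_smul, h1, h2, hs, hs, mul_comm, sub_self]
  rw [hk, LinearMap.mem_ker, map_sub, map_smul, map_smul, h1', h2', hs, hs, ← map_sub,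
    Ideal.Quotient.eq_zero_iff_mem, resY_eq_zero_iff, map_sub, map_mul, map_mul] at hmem
  exact sub_eq_zero.1 hmem

/-- for two pairs `(p,q)` and `(p′,q′)` of homogeneous polynomials of
degrees `b, 3a+b+2`, each with no common zeros along `Y`, the corresponding maps
`u, u′ : I_Z → S/(x,y)` have equal kernels iff there exists `d ∈ k*` with
`p′ ≡ dp` and `q′ ≡ dq (mod (x,y))`. -/
theorem stmt_12 {k : Type*} [Field k] [IsAlgClosed k] (a b : ℕ)
    (f g : MvPolynomial (Fin 4) k)
    (hf : f.IsHomogeneous (a + 1)) (hg : g.IsHomogeneous (a + 1))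
    (hfg : NoCommonZerosAlongY f g)
    (p q p' q' : MvPolynomial (Fin 4) k)
    (hp : p.IsHomogeneous b) (hq : q.IsHomogeneous (3 * a + b + 2))
    (hp' : p'.IsHomogeneous b) (hq' : q'.IsHomogeneous (3 * a + b + 2))
    (hpq : NoCommonZerosAlongY p q) (hpq' : NoCommonZerosAlongY p' q')
    (u u' : (Ideal.span {X 0 ^ 2, X 0 * X 1, X 1 ^ 2, X 0 * g - X 1 * f} :
          Ideal (MvPolynomial (Fin 4) k)) →ₗ[MvPolynomial (Fin 4) k]
        (MvPolynomial (Fin 4) k ⧸ (Ideal.span {X 0, X 1} : Ideal (MvPolynomial (Fin 4) k))))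
    (hu1 : u ⟨X 0 ^ 2, Ideal.subset_span (by simp)⟩ = Ideal.Quotient.mk _ (p * f ^ 2))
    (hu2 : u ⟨X 0 * X 1, Ideal.subset_span (by simp)⟩ = Ideal.Quotient.mk _ (p * (f * g)))
    (hu3 : u ⟨X 1 ^ 2, Ideal.subset_span (by simp)⟩ = Ideal.Quotient.mk _ (p * g ^ 2))
    (hu4 : u ⟨X 0 * g - X 1 * f, Ideal.subset_span (by simp)⟩ = Ideal.Quotient.mk _ q)
    (hu1' : u' ⟨X 0 ^ 2, Ideal.subset_span (by simp)⟩ = Ideal.Quotient.mk _ (p' * f ^ 2))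
    (hu2' : u' ⟨X 0 * X 1, Ideal.subset_span (by simp)⟩ = Ideal.Quotient.mk _ (p' * (f * g)))
    (hu3' : u' ⟨X 1 ^ 2, Ideal.subset_span (by simp)⟩ = Ideal.Quotient.mk _ (p' * g ^ 2))
    (hu4' : u' ⟨X 0 * g - X 1 * f, Ideal.subset_span (by simp)⟩ = Ideal.Quotient.mk _ q') :
    LinearMap.ker u = LinearMap.ker u' ↔
      ∃ d : k, d ≠ 0 ∧
        p' - C d * p ∈ (Ideal.span {X 0, X 1} : Ideal (MvPolynomial (Fin 4) k)) ∧
        q' - C d * q ∈ (Ideal.span {X 0, X 1} : Ideal (MvPolynomial (Fin 4) k)) := by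
  constructor
  · intro hk
    have e1 := cross_of_ker u u' hk hu1 hu4 hu1' hu4'
    have e3 := cross_of_ker u u' hk hu3 hu4 hu3' hu4'
    simp only [map_mul, map_pow] at e1 e3
    have hne : resY k f ≠ 0 ∨ resY k g ≠ 0 := by
      rcases hfg 1 0 (by simp) with h | h
      · left
        intro h0
        apply h
        have := eval_resY ![1, 0] f
        simpa [h0] using this.symm
      · right
        intro h0
        apply h
        have := eval_resY ![1, 0] g
        simpa [h0] using this.symm
    have e : resY k q * resY k p' = resY k p * resY k q' := by
      rcases hne with h | h
      · apply mul_right_cancel₀ (pow_ne_zero 2 h)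
        linear_combination e1
      · apply mul_right_cancel₀ (pow_ne_zero 2 h)
        linear_combination e3
    obtain ⟨d, hd, h1, h2⟩ := exists_unit_of_cross (isRelPrime_resY hpq) (isRelPrime_resY hpq') e
    have hC : resY k (C d) = C d := by simp [resY]
    refine ⟨d, hd, ?_, ?_⟩
    · rw [resY_eq_zero_iff, map_sub, map_mul, hC, h1, sub_self]
    · rw [resY_eq_zero_iff, map_sub, map_mul, hC, h2, sub_self]
  · rintro ⟨d, hd, h1, h2⟩
    have hs : ∀ r t : MvPolynomial (Fin 4) k,
        r • (Ideal.Quotient.mk (Ideal.span {X 0, X 1} : Ideal (MvPolynomial (Fin 4) k)) t) =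
          Ideal.Quotient.mk _ (r * t) := fun _ _ => rfl
    have hp1 := Ideal.Quotient.eq.2 h1
    have hq1 := Ideal.Quotient.eq.2 h2
    have key : ∀ z (hz : z ∈ (Ideal.span {X 0 ^ 2, X 0 * X 1, X 1 ^ 2, X 0 * g - X 1 * f} :
          Ideal (MvPolynomial (Fin 4) k))), u' ⟨z, hz⟩ = (C d : MvPolynomial (Fin 4) k) • u ⟨z, hz⟩ := by
      intro z hz
      induction hz using Submodule.span_induction with
      | mem z hz =>
        rcases hz with rfl | rfl | rfl | rfl
        · rw [hu1, hu1', hs, map_mul, hp1, ← map_mul, mul_assoc]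
        · rw [hu2, hu2', hs, map_mul, hp1, ← map_mul, mul_assoc]
        · rw [hu3, hu3', hs, map_mul, hp1, ← map_mul, mul_assoc]
        · rw [hu4, hu4', hs, hq1]
      | zero =>
        exact (map_zero u').trans (by rw [show u ⟨0, _⟩ = 0 from map_zero u, smul_zero])
      | add x y hx hy ihx ihy =>
        have a1 := map_add u ⟨x, hx⟩ ⟨y, hy⟩
        have a2 := map_add u' ⟨x, hx⟩ ⟨y, hy⟩
        rw [ihx, ihy, ← smul_add, ← a1] at a2
        exact a2
      | smul c x hx ih =>
        have a1 := map_smul u c ⟨x, hx⟩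
        have a2 := map_smul u' c ⟨x, hx⟩
        rw [ih, smul_comm, ← a1] at a2
        exact a2
    have hunit : IsUnit (C d : MvPolynomial (Fin 4) k) := (IsUnit.mk0 d hd).map C
    ext ⟨z, hz⟩
    rw [LinearMap.mem_ker, LinearMap.mem_ker, key z hz, hunit.smul_eq_zero]
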